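/- Fix d ≥ 2 and X₀, Y₀ ∈ S^{d−1}. There exists a coupling of two Kac walks on the sphere started at X₀ and Y₀, i.e., a stochastic process (X_t, Y_t)_{t≥0} on a common probability space with X₀, Y₀ as given, such that each of (X_t) and (Y_t) separately has the law of the Kac walk on S^{d−1} started at its initial point, and for every t ≥ 0, E[ Σ_{i=1}^d (X_t[i]² − Y_t[i]²)² ] ≤ 2 (1 − 1/(2d))^t ≤ 2 e^{−t/(2d)}. -/

import Mathlib

noncomputable section

open MeasureTheory Real
open scoped ENNReal

namespace KacJL

instance matrixMeasurableSpace {m n : Type*} : MeasurableSpace (Matrix m n ℝ) :=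
  inferInstanceAs (MeasurableSpace (m → n → ℝ))

/-- The rotation by angle `θ` in the `(i,j)` coordinate plane of `ℝ^d`. -/
def rotM (d : ℕ) (i j : Fin d) (θ : ℝ) : Matrix (Fin d) (Fin d) ℝ :=
  Matrix.of fun k l =>
    if k = i ∧ l = i then Real.cos θ
    else if k = i ∧ l = j then -Real.sin θ
    else if k = j ∧ l = i then Real.sin θ
    else if k = j ∧ l = j then Real.cos θ
    else if k = l then 1 else 0

/-- The uniform distribution on pairs of distinct coordinates in `Fin d`. -/
def pairUniform (d : ℕ) : Measure (Fin d × Fin d) :=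
  ((d * (d - 1) : ℕ) : ℝ≥0∞)⁻¹ •
    (Measure.count.restrict {p : Fin d × Fin d | p.1 ≠ p.2})

/-- The uniform distribution on `[0, 2π)`. -/
def angleUniform : Measure ℝ :=
  (ENNReal.ofReal (2 * Real.pi))⁻¹ • (volume.restrict (Set.Ico 0 (2 * Real.pi)))

/-- The distribution of the update variables of one step of the Kac walk. -/
def kacParam (d : ℕ) : Measure ((Fin d × Fin d) × ℝ) :=
  (pairUniform d).prod angleUniform

/-- The product `R_{i_T,j_T,θ_T} ⋯ R_{i_1,j_1,θ_1}` of the rotations determined by the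
update variables `ω`. -/
def kacMatrix {d T : ℕ} (ω : Fin T → (Fin d × Fin d) × ℝ) : Matrix (Fin d) (Fin d) ℝ :=
  ((List.ofFn fun t => rotM d (ω t).1.1 (ω t).1.2 (ω t).2).reverse).prod

/-- The product of the first `s` rotations determined by the update variables `ω`
(rotations with index `≥ s` are replaced by the identity). -/
def prodUpTo {d T : ℕ} (ω : Fin T → (Fin d × Fin d) × ℝ) (s : ℕ) :
    Matrix (Fin d) (Fin d) ℝ :=
  ((List.ofFn fun u : Fin T =>
      if (u : ℕ) < s then rotM d (ω u).1.1 (ω u).1.2 (ω u).2 else 1).reverse).prod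

/-- The law of the path `(X_0, X_1, …, X_T)` of the Kac walk on the sphere started
at `x₀`. -/
def kacPathLaw (d T : ℕ) (x₀ : Fin d → ℝ) : Measure (Fin (T + 1) → Fin d → ℝ) :=
  Measure.map (fun ω : Fin T → (Fin d × Fin d) × ℝ =>
      fun s : Fin (T + 1) => (prodUpTo ω (s : ℕ)).mulVec x₀)
    (Measure.pi fun _ : Fin T => kacParam d)

/-!
Both walks rotate in the same coordinate plane, the second one through an angle chosen so that the
two planar projections come out parallel; since the angle is uniform modulo `2π`, the shift does
not change the law of the second walk, not even conditionally on the past. If `a k` denotes the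
difference of the squared `k`-th coordinates, then a step in the plane of `i` and `j` replaces
`a i` and `a j` by `(a i + a j) * cos φ ^ 2` and `(a i + a j) * sin φ ^ 2` with `φ` uniform, and
`cos φ ^ 4 + sin φ ^ 4` has mean `3 / 4`. As `∑ k, a k = 0`, averaging over `i ≠ j` multiplies
`∑ k, a k ^ 2` by exactly `1 - (d + 2) / (2 * d * (d - 1)) ≤ 1 - 1 / (2 * d)`.
-/

section FiniteSumsAndTrigonometry

lemma sum_sub_sum_eq_of_eq_off_pair {ι M : Type*} [Fintype ι] [AddCommGroup M]
    {f g : ι → M} {i j : ι} (hij : i ≠ j) (hfg : ∀ k, k ≠ i ∧ k ≠ j → f k = g k) :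
    ∑ k, f k - ∑ k, g k = (f i - g i) + (f j - g j) := by
  rw [← Finset.sum_sub_distrib]
  exact Fintype.sum_eq_add i j hij fun k hk => sub_eq_zero.2 (hfg k hk)

lemma sum_offDiag_sq_update_of_sum_eq_zero {ι : Type*} [Fintype ι] (a : ι → ℝ) (ha : ∑ i, a i = 0) :
    ∑ p ∈ (Finset.univ : Finset ι).offDiag,
        (∑ i, a i ^ 2 - a p.1 ^ 2 - a p.2 ^ 2 + (a p.1 + a p.2) ^ 2 * (3 / 4)) =
      ((Fintype.card ι : ℝ) ^ 2 - 3 / 2 * Fintype.card ι - 1) * ∑ i, a i ^ 2 := by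
  classical
  set A := ∑ i, a i ^ 2
  have hsplit (f : ι × ι → ℝ) : ∑ p ∈ (Finset.univ : Finset ι).offDiag, f p =
      ∑ i, ∑ j, f (i, j) - ∑ i, f (i, i) := by
    rw [← Fintype.sum_prod_type', ← Finset.univ_product_univ, ← Finset.diag_union_offDiag,
      Finset.sum_union (Finset.disjoint_diag_offDiag _), Finset.sum_diag, add_sub_cancel_left]
  have hexpand (i j : ι) : A - a i ^ 2 - a j ^ 2 + (a i + a j) ^ 2 * (3 / 4) =
      A - a i ^ 2 / 4 - a j ^ 2 / 4 + 3 / 2 * a i * a j := by ring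
  simp only [hsplit, hexpand, Finset.sum_add_distrib, Finset.sum_sub_distrib, Finset.sum_const,
    ← Finset.mul_sum, ← Finset.sum_div, ha, Finset.card_univ, nsmul_eq_mul, mul_zero]
  simp only [mul_assoc, ← sq, ← Finset.mul_sum]
  ring

lemma sq_norm_complexMk (a b : ℝ) : ‖(⟨a, b⟩ : ℂ)‖ ^ 2 = a ^ 2 + b ^ 2 := by
  rw [Complex.sq_norm, Complex.normSq_mk, sq, sq]

lemma cos_pow_four_add_sin_pow_four (α : ℝ) :
    cos α ^ 4 + sin α ^ 4 = 3 / 4 + cos (4 * α) / 4 := by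
  have hsin : sin α ^ 4 = (1 - cos α ^ 2) ^ 2 := by rw [← sin_sq]; ring
  rw [hsin, show 4 * α = 2 * (2 * α) by ring, cos_two_mul, cos_two_mul]
  ring

lemma one_sub_one_div_pow_le_exp {n : ℝ} (hn : 1 ≤ n) (t : ℕ) :
    (1 - 1 / n) ^ t ≤ exp (-(t : ℝ) / n) := by
  have hbase : 0 ≤ 1 - 1 / n := sub_nonneg.2 ((div_le_one (by linarith)).2 hn)
  calc (1 - 1 / n) ^ t ≤ exp (-(1 / n)) ^ t := pow_le_pow_left₀ hbase (one_sub_le_exp_neg _) t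
    _ = exp (-(t : ℝ) / n) := by rw [← exp_nat_mul]; ring_nf

end FiniteSumsAndTrigonometry

section DrivenChain

variable {S P Q : Type*}

/-- The state after `n` steps of the Markov chain with random mapping representation `step`,
started at `z` and fed with the successive innovations `past`. -/
def drivenState (step : S → P → S) (z : S) : (n : ℕ) → (Fin n → P) → S
  | 0, _ => z
  | n + 1, past => step (drivenState step z n fun u => past u.castSucc) (past (Fin.last n))

lemma drivenState_invariant {step : S → P → S} {I : S → Prop} {G : P → Prop}
    (hI : ∀ s q, G q → I s → I (step s q)) {z : S} (hz : I z) :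
    ∀ {n : ℕ} {past : Fin n → P}, (∀ u, G (past u)) → I (drivenState step z n past)
  | 0, _, _ => hz
  | n + 1, _, hpast =>
    hI _ _ (hpast (Fin.last n)) (drivenState_invariant hI hz fun u => hpast u.castSucc)

variable [MeasurableSpace S] [MeasurableSpace P] [MeasurableSpace Q]

lemma measurable_drivenState {step : S → P → S} (hstep : Measurable (Function.uncurry step))
    (z : S) (n : ℕ) : Measurable (drivenState step z n) := by
  induction n with
  | zero => exact measurable_const
  | succ n ih =>
    have hinit : Measurable fun (past : Fin (n + 1) → P) (u : Fin n) => past u.castSucc := by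
      fun_prop
    exact hstep.comp ((ih.comp hinit).prodMk (measurable_pi_apply (Fin.last n)))

lemma measurePreserving_init_last (μ : Measure P) [SigmaFinite μ] (n : ℕ) :
    MeasurePreserving
      (fun ω : Fin (n + 1) → P => ((fun u : Fin n => ω u.castSucc), ω (Fin.last n)))
      (Measure.pi fun _ => μ) ((Measure.pi fun _ => μ).prod μ) := by
  convert! Measure.measurePreserving_swap.comp
    (measurePreserving_piFinSuccAbove (fun _ : Fin (n + 1) => μ) (Fin.last n)) using 1
  funext ω
  simp only [MeasurableEquiv.piFinSuccAbove, Fin.insertNthEquiv, MeasurableEquiv.coe_mk,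
    Function.comp_apply, Equiv.coe_fn_symm_mk, Prod.swap_prod_mk, Fin.removeNth_last]
  rfl

lemma measurePreserving_snoc (μ : Measure P) [SigmaFinite μ] (n : ℕ) :
    MeasurePreserving (fun w : (Fin n → P) × P => (Fin.snoc w.1 w.2 : Fin (n + 1) → P))
      ((Measure.pi fun _ => μ).prod μ) (Measure.pi fun _ => μ) := by
  convert! (measurePreserving_piFinSuccAbove (fun _ : Fin (n + 1) => μ) (Fin.last n)).symm.comp
    Measure.measurePreserving_swap using 1
  funext w
  simp [MeasurableEquiv.piFinSuccAbove, Fin.insertNthEquiv]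

/- Conditionally on the past, each transformed innovation has law `ν`, hence is independent of the
past. -/
theorem measurePreserving_predictable {μ : Measure P} {ν : Measure Q} [IsProbabilityMeasure μ]
    [IsProbabilityMeasure ν] {F : (n : ℕ) → (Fin n → P) → P → Q}
    (hF : ∀ n, Measurable (Function.uncurry (F n)))
    (hFμ : ∀ n past, MeasurePreserving (F n past) μ ν) (n : ℕ) :
    MeasurePreserving
      (fun (ω : Fin n → P) (u : Fin n) => F u (fun v => ω (v.castLE u.is_le')) (ω u))
      (Measure.pi fun _ => μ) (Measure.pi fun _ => ν) := by
  induction n with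
  | zero =>
    refine ⟨by fun_prop, ?_⟩
    rw [Measure.pi_of_empty, Measure.pi_of_empty, Measure.map_dirac]
    congr 1
    exact Subsingleton.elim _ _
  | succ n ih =>
    have hskew := ih.skew_product (hF n) (ae_of_all _ fun past => (hFμ n past).map_eq)
    convert! (measurePreserving_snoc ν n).comp (hskew.comp (measurePreserving_init_last μ n))
      using 1
    funext ω u
    refine Fin.lastCases ?_ (fun u => ?_) u
    · simp [Function.comp_def]; rfl
    · simp [Function.comp_def]

lemma measurePreserving_restrict_fin (μ : Measure P) [IsProbabilityMeasure μ] (n : ℕ) :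
    MeasurePreserving (fun (ω : ℕ → P) (u : Fin n) => ω u)
      (Measure.infinitePi fun _ => μ) (Measure.pi fun _ => μ) where
  measurable := by fun_prop
  map_eq := by
    rw [Measure.map_infinitePi_infinitePi_of_inj (P := fun _ => μ) (f := fun u : Fin n => (u : ℕ))
      Fin.val_injective, Measure.infinitePi_eq_pi]

lemma integral_drivenState {μ : Measure P} [IsProbabilityMeasure μ] {step : S → P → S}
    (hstep : Measurable (Function.uncurry step)) {I : S → Prop} {G : P → Prop}
    (hG : ∀ᵐ q ∂μ, G q) (hI : ∀ s q, G q → I s → I (step s q))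
    {V : S → ℝ} (hV : Measurable V) {C ρ : ℝ} (hC : ∀ s, I s → ‖V s‖ ≤ C)
    (hρ : ∀ s, I s → ∫ q, V (step s q) ∂μ = ρ * V s) {z : S} (hz : I z) (n : ℕ) :
    ∫ past, V (drivenState step z n past) ∂(Measure.pi fun _ => μ) = ρ ^ n * V z := by
  have hIae (n : ℕ) : ∀ᵐ past ∂(Measure.pi fun _ : Fin n => μ), I (drivenState step z n past) := by
    have hpast : ∀ᵐ past ∂(Measure.pi fun _ : Fin n => μ), ∀ u, G (past u) :=
      ae_all_iff.2 fun u => (measurePreserving_eval _ u).quasiMeasurePreserving.ae hG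
    filter_upwards [hpast] with past using drivenState_invariant hI hz
  induction n with
  | zero => simp [drivenState]
  | succ n ih =>
    let W : (Fin n → P) × P → ℝ := fun w => V (step (drivenState step z n w.1) w.2)
    have hW : Measurable W := hV.comp (hstep.comp
      (((measurable_drivenState hstep z n).comp measurable_fst).prodMk measurable_snd))
    have hsplit := measurePreserving_init_last μ n
    have hWint : Integrable W ((Measure.pi fun _ => μ).prod μ) := by
      rw [← hsplit.integrable_comp hW.aestronglyMeasurable]
      refine .of_bound (hW.comp hsplit.measurable).aestronglyMeasurable C ?_
      filter_upwards [hIae (n + 1)] with past using hC _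
    calc ∫ past, V (drivenState step z (n + 1) past) ∂(Measure.pi fun _ => μ)
        = ∫ w, W w ∂((Measure.pi fun _ => μ).prod μ) := by
          rw [← hsplit.map_eq, integral_map hsplit.aemeasurable hW.aestronglyMeasurable]
          rfl
      _ = ∫ past, ∫ q, V (step (drivenState step z n past) q) ∂μ ∂(Measure.pi fun _ => μ) :=
          integral_prod W hWint
      _ = ∫ past, ρ * V (drivenState step z n past) ∂(Measure.pi fun _ => μ) :=
          integral_congr_ae <| by filter_upwards [hIae n] with past using hρ _
      _ = ρ ^ (n + 1) * V z := by rw [integral_const_mul, ih, pow_succ', mul_assoc]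

end DrivenChain

section AngleUniform

lemma measurePreserving_toIocMod_add {T : ℝ} (hT : 0 < T) (a s : ℝ) :
    MeasurePreserving (fun θ => toIocMod hT a (θ + s))
      (volume.restrict (Set.Ioc a (a + T))) (volume.restrict (Set.Ioc a (a + T))) := by
  have : Fact (0 < T) := ⟨hT⟩
  have hval : MeasurePreserving ((↑) : Set.Ioc a (a + T) → ℝ)
      (Measure.comap Subtype.val volume) (volume.restrict (Set.Ioc a (a + T))) :=
    ⟨measurable_subtype_coe, map_comap_subtype_coe measurableSet_Ioc _⟩
  exact hval.comp <| (AddCircle.measurePreserving_equivIoc T).comp <|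
    (measurePreserving_add_right volume (s : AddCircle T)).comp (AddCircle.measurePreserving_mk T a)

lemma measurable_toIocMod {T : ℝ} (hT : 0 < T) (a : ℝ) : Measurable (toIocMod hT a) := by
  have : Fact (0 < T) := ⟨hT⟩
  exact measurable_subtype_coe.comp
    ((AddCircle.measurableEquivIoc T a).measurable.comp AddCircle.measurable_mk')

lemma angleUniform_eq_restrict_Ioc :
    angleUniform = (ENNReal.ofReal (2 * π))⁻¹ • volume.restrict (Set.Ioc 0 (0 + 2 * π)) := by
  rw [angleUniform, restrict_Ico_eq_restrict_Ioc, zero_add]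

lemma measurePreserving_toIocMod_angleUniform (s : ℝ) :
    MeasurePreserving (fun θ => toIocMod two_pi_pos 0 (θ + s)) angleUniform angleUniform := by
  rw [angleUniform_eq_restrict_Ioc]
  exact (measurePreserving_toIocMod_add two_pi_pos 0 s).smul_measure _

instance : IsProbabilityMeasure angleUniform := by
  constructor
  simp only [angleUniform, Measure.smul_apply, Measure.restrict_apply MeasurableSet.univ,
    Set.univ_inter, Real.volume_Ico, sub_zero, smul_eq_mul]
  exact ENNReal.inv_mul_cancel (by simpa using pi_pos) ENNReal.ofReal_ne_top

lemma integral_angleUniform (f : ℝ → ℝ) :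
    ∫ θ, f θ ∂angleUniform = (2 * π)⁻¹ * ∫ θ in (0)..(2 * π), f θ := by
  rw [angleUniform_eq_restrict_Ioc, integral_smul_measure, zero_add, ENNReal.toReal_inv,
    ENNReal.toReal_ofReal two_pi_pos.le, smul_eq_mul, intervalIntegral.integral_of_le two_pi_pos.le]

lemma integral_cos_pow_four_add_sin_pow_four (φ : ℝ) :
    ∫ θ, (cos (θ + φ) ^ 4 + sin (θ + φ) ^ 4) ∂angleUniform = 3 / 4 := by
  have hcos : ∫ θ in (0)..(2 * π), cos (4 * (θ + φ)) = 0 := by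
    simp only [mul_add]
    rw [intervalIntegral.integral_comp_mul_add _ four_ne_zero, integral_cos,
      show 4 * (2 * π) + 4 * φ = 4 * φ + (4 : ℕ) * (2 * π) by push_cast; ring,
      sin_add_nat_mul_two_pi]
    simp
  simp only [integral_angleUniform, cos_pow_four_add_sin_pow_four]
  rw [intervalIntegral.integral_add (by simp)
    (Continuous.intervalIntegrable (by fun_prop) _ _), intervalIntegral.integral_div,
    intervalIntegral.integral_div, hcos]
  simp only [intervalIntegral.integral_const, smul_eq_mul]
  field_simp
  ring

end AngleUniform

section PairUniform

lemma setOf_fst_ne_snd_eq_offDiag {ι : Type*} [Fintype ι] :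
    {p : ι × ι | p.1 ≠ p.2} = ((Finset.univ : Finset ι).offDiag : Set (ι × ι)) := by
  ext p
  simp

lemma integral_pairUniform {d : ℕ} (f : Fin d × Fin d → ℝ) :
    ∫ p, f p ∂(pairUniform d) =
      (d * (d - 1) : ℝ)⁻¹ * ∑ p ∈ (Finset.univ : Finset (Fin d)).offDiag, f p := by
  have hcard : ((d * (d - 1) : ℕ) : ℝ) = d * (d - 1) := by cases d <;> simp
  rw [pairUniform, integral_smul_measure, ENNReal.toReal_inv, ENNReal.toReal_natCast, hcard,
    setOf_fst_ne_snd_eq_offDiag, setIntegral_finset _ Integrable.of_finite.integrableOn]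
  simp [Measure.real]

instance {d : ℕ} [d.AtLeastTwo] : IsProbabilityMeasure (pairUniform d) := by
  have hd : 2 ≤ d := Nat.AtLeastTwo.prop
  constructor
  rw [pairUniform, Measure.smul_apply, Measure.restrict_apply_univ, setOf_fst_ne_snd_eq_offDiag,
    Measure.count_apply_finset, Finset.offDiag_card, Finset.card_fin, ← Nat.mul_sub_one,
    smul_eq_mul]
  exact ENNReal.inv_mul_cancel (mod_cast (Nat.mul_pos (by lia) (by lia)).ne')
    (ENNReal.natCast_ne_top _)

instance {d : ℕ} [d.AtLeastTwo] : IsProbabilityMeasure (kacParam d) := by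
  unfold kacParam; infer_instance

lemma ae_kacParam_ne (d : ℕ) : ∀ᵐ q ∂(kacParam d), q.1.1 ≠ q.1.2 :=
  Measure.quasiMeasurePreserving_fst.ae <|
    Measure.ae_smul_measure (ae_restrict_mem (Set.toFinite _).measurableSet) _

end PairUniform

section KacStep

variable {d : ℕ}

/-- The random input of one step of the Kac walk: an ordered pair of coordinates and an angle. -/
abbrev KacUpdate (d : ℕ) := (Fin d × Fin d) × ℝ

/-- One step of the Kac walk: rotate `x` in the coordinate plane and by the angle given by `q`. -/
def kacStep (x : Fin d → ℝ) (q : KacUpdate d) : Fin d → ℝ :=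
  (rotM d q.1.1 q.1.2 q.2).mulVec x

/-- The polar angle of the projection of `x` to the coordinate plane of the pair `p`, with the
value `0` where that projection vanishes. -/
def planeAngle (x : Fin d → ℝ) (p : Fin d × Fin d) : ℝ := Complex.arg ⟨x p.1, x p.2⟩

lemma kacStep_apply_fst {x : Fin d → ℝ} {q : KacUpdate d} (hq : q.1.1 ≠ q.1.2) :
    kacStep x q q.1.1 = cos q.2 * x q.1.1 - sin q.2 * x q.1.2 := by
  rw [kacStep, Matrix.mulVec, dotProduct, Fintype.sum_eq_add _ _ hq]
  · simp [rotM, hq.symm, sub_eq_add_neg]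
  · rintro k ⟨hk₁, hk₂⟩
    simp [rotM, hk₁, hk₂, hk₁.symm]

lemma kacStep_apply_snd {x : Fin d → ℝ} {q : KacUpdate d} (hq : q.1.1 ≠ q.1.2) :
    kacStep x q q.1.2 = sin q.2 * x q.1.1 + cos q.2 * x q.1.2 := by
  rw [kacStep, Matrix.mulVec, dotProduct, Fintype.sum_eq_add _ _ hq]
  · simp [rotM, hq, hq.symm]
  · rintro k ⟨hk₁, hk₂⟩
    simp [rotM, hk₁, hk₂, hk₂.symm]

lemma kacStep_apply_of_ne {x : Fin d → ℝ} {q : KacUpdate d} {k : Fin d}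
    (hk : k ≠ q.1.1 ∧ k ≠ q.1.2) : kacStep x q k = x k := by
  simp [kacStep, Matrix.mulVec, dotProduct, rotM, hk.1, hk.2]

lemma norm_mul_cos_planeAngle (x : Fin d → ℝ) (p : Fin d × Fin d) :
    ‖(⟨x p.1, x p.2⟩ : ℂ)‖ * cos (planeAngle x p) = x p.1 :=
  Complex.norm_mul_cos_arg _

lemma norm_mul_sin_planeAngle (x : Fin d → ℝ) (p : Fin d × Fin d) :
    ‖(⟨x p.1, x p.2⟩ : ℂ)‖ * sin (planeAngle x p) = x p.2 :=
  Complex.norm_mul_sin_arg _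

lemma kacStep_apply_fst_sq {x : Fin d → ℝ} {q : KacUpdate d} (hq : q.1.1 ≠ q.1.2) :
    kacStep x q q.1.1 ^ 2 =
      (x q.1.1 ^ 2 + x q.1.2 ^ 2) * cos (q.2 + planeAngle x q.1) ^ 2 := by
  rw [← sq_norm_complexMk, ← mul_pow, kacStep_apply_fst hq, cos_add, mul_sub,
    mul_left_comm, norm_mul_cos_planeAngle, mul_left_comm, norm_mul_sin_planeAngle]

lemma kacStep_apply_snd_sq {x : Fin d → ℝ} {q : KacUpdate d} (hq : q.1.1 ≠ q.1.2) :
    kacStep x q q.1.2 ^ 2 =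
      (x q.1.1 ^ 2 + x q.1.2 ^ 2) * sin (q.2 + planeAngle x q.1) ^ 2 := by
  rw [← sq_norm_complexMk, ← mul_pow, kacStep_apply_snd hq, sin_add, mul_add,
    mul_left_comm, norm_mul_cos_planeAngle, mul_left_comm, norm_mul_sin_planeAngle]

lemma sum_sq_kacStep {x : Fin d → ℝ} {q : KacUpdate d} (hq : q.1.1 ≠ q.1.2) :
    ∑ k, kacStep x q k ^ 2 = ∑ k, x k ^ 2 := by
  rw [← sub_eq_zero, sum_sub_sum_eq_of_eq_off_pair hq fun k hk => by rw [kacStep_apply_of_ne hk],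
    kacStep_apply_fst_sq hq, kacStep_apply_snd_sq hq, cos_sq']
  ring

lemma measurable_kacStep : Measurable (Function.uncurry (kacStep (d := d))) := by
  have hentry (k l : Fin d) :
      Measurable fun q : KacUpdate d => rotM d q.1.1 q.1.2 q.2 k l := by
    refine measurable_from_prod_countable_right fun p => ?_
    simp only [rotM, Matrix.of_apply]
    split_ifs <;> fun_prop
  refine measurable_pi_iff.2 fun k => ?_
  simp only [Function.uncurry_def, kacStep, Matrix.mulVec, dotProduct]
  exact Finset.measurable_sum _ fun l _ => ((hentry k l).comp measurable_snd).mul (by fun_prop)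

lemma measurable_planeAngle :
    Measurable fun w : (Fin d → ℝ) × (Fin d × Fin d) => planeAngle w.1 w.2 := by
  refine measurable_from_prod_countable_left fun p => Complex.measurable_arg.comp ?_
  simp only [Complex.mk_eq_add_mul_I]
  fun_prop

end KacStep

section PathLaw

variable {d T : ℕ}

lemma prodUpTo_zero (ω : Fin T → KacUpdate d) : prodUpTo ω 0 = 1 := by
  simp [prodUpTo]

lemma prodUpTo_succ_eq_tail_mul (ω : Fin (T + 1) → KacUpdate d) (s : ℕ) :
    prodUpTo ω (s + 1) = prodUpTo (Fin.tail ω) s * rotM d (ω 0).1.1 (ω 0).1.2 (ω 0).2 := by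
  simp [prodUpTo, List.ofFn_succ, Fin.tail]

lemma prodUpTo_succ (ω : Fin T → KacUpdate d) (s : Fin T) :
    prodUpTo ω (s + 1) = rotM d (ω s).1.1 (ω s).1.2 (ω s).2 * prodUpTo ω s := by
  induction T with
  | zero => exact s.elim0
  | succ T ih =>
    cases s using Fin.cases with
    | zero => simp [prodUpTo_succ_eq_tail_mul, prodUpTo_zero]
    | succ s =>
      rw [Fin.val_succ, prodUpTo_succ_eq_tail_mul ω (s + 1), ih, prodUpTo_succ_eq_tail_mul,
        mul_assoc]
      rfl

lemma prodUpTo_succ_mulVec (ω : Fin T → KacUpdate d) (s : Fin T) (x : Fin d → ℝ) :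
    (prodUpTo ω (s + 1)).mulVec x = kacStep ((prodUpTo ω s).mulVec x) (ω s) := by
  rw [prodUpTo_succ, ← Matrix.mulVec_mulVec, kacStep]

lemma eq_prodUpTo_mulVec {ω : Fin T → KacUpdate d} {v : ℕ → Fin d → ℝ}
    (hv : ∀ u : Fin T, v (u + 1) = kacStep (v u) (ω u)) :
    ∀ {s : ℕ}, s ≤ T → v s = (prodUpTo ω s).mulVec (v 0)
  | 0, _ => by rw [prodUpTo_zero, Matrix.one_mulVec]
  | s + 1, hs => by
    rw [prodUpTo_succ_mulVec ω ⟨s, hs⟩, ← eq_prodUpTo_mulVec hv (Nat.le_of_succ_le hs)]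
    exact hv ⟨s, hs⟩

lemma measurable_prodUpTo_mulVec (x : Fin d → ℝ) :
    ∀ {s : ℕ}, s ≤ T → Measurable fun ω : Fin T → KacUpdate d => (prodUpTo ω s).mulVec x
  | 0, _ => by simp only [prodUpTo_zero, measurable_const]
  | s + 1, hs => by
    simp only [prodUpTo_succ_mulVec _ ⟨s, hs⟩]
    exact measurable_kacStep.comp
      ((measurable_prodUpTo_mulVec x (Nat.le_of_succ_le hs)).prodMk (measurable_pi_apply _))

lemma map_path_eq_kacPathLaw {Ω : Type*} [MeasurableSpace Ω] {μ : Measure Ω}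
    {X : ℕ → Ω → Fin d → ℝ} {U : ℕ → Ω → KacUpdate d} {x : Fin d → ℝ} (hX₀ : ∀ ω, X 0 ω = x)
    (hX : ∀ n ω, X (n + 1) ω = kacStep (X n ω) (U n ω))
    (hU : MeasurePreserving (fun ω (u : Fin T) => U u ω) μ (Measure.pi fun _ => kacParam d)) :
    μ.map (fun ω (s : Fin (T + 1)) => X s ω) = kacPathLaw d T x := by
  rw [kacPathLaw, ← hU.map_eq, Measure.map_map
    (measurable_pi_iff.2 fun s => measurable_prodUpTo_mulVec x s.is_le) hU.measurable]
  congr 1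
  funext ω s
  have hpath := eq_prodUpTo_mulVec (v := fun n => X n ω) (fun u => hX u ω) s.is_le
  rwa [hX₀] at hpath

end PathLaw

section CoupledStep

variable {d : ℕ}

/-- The states of two walks run jointly. -/
abbrev StatePair (d : ℕ) := (Fin d → ℝ) × (Fin d → ℝ)

/-- The input of the second walk when the first one uses `q`: the same coordinate plane, with the
angle shifted modulo `2π` so that both walks reach the same polar angle in that plane. -/
def alignUpdate (z : StatePair d) (q : KacUpdate d) : KacUpdate d :=
  (q.1, toIocMod two_pi_pos 0 (q.2 + (planeAngle z.1 q.1 - planeAngle z.2 q.1)))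

/-- One step of the contractive coupling of two Kac walks. -/
def coupledStep (z : StatePair d) (q : KacUpdate d) : StatePair d :=
  (kacStep z.1 q, kacStep z.2 (alignUpdate z q))

/-- Both states lie on the sphere of squared radius `r` centred at the origin. -/
def OnSphere (r : ℝ) (z : StatePair d) : Prop := ∑ k, z.1 k ^ 2 = r ∧ ∑ k, z.2 k ^ 2 = r

/-- The difference of the squares of the `k`-th coordinates of the two states. -/
def sqDiff (z : StatePair d) (k : Fin d) : ℝ := z.1 k ^ 2 - z.2 k ^ 2

/-- The squared Euclidean distance between the vectors of squared coordinates of the two states. -/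
def sqGap (z : StatePair d) : ℝ := ∑ k, sqDiff z k ^ 2

lemma measurable_alignUpdate : Measurable (Function.uncurry (alignUpdate (d := d))) := by
  have hangle₁ : Measurable fun w : StatePair d × KacUpdate d => planeAngle w.1.1 w.2.1 :=
    measurable_planeAngle.comp
      ((measurable_fst.comp measurable_fst).prodMk (measurable_fst.comp measurable_snd))
  have hangle₂ : Measurable fun w : StatePair d × KacUpdate d => planeAngle w.1.2 w.2.1 :=
    measurable_planeAngle.comp
      ((measurable_snd.comp measurable_fst).prodMk (measurable_fst.comp measurable_snd))
  exact (measurable_fst.comp measurable_snd).prodMk <|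
    (measurable_toIocMod two_pi_pos 0).comp (by fun_prop)

lemma measurable_coupledStep : Measurable (Function.uncurry (coupledStep (d := d))) :=
  (measurable_kacStep.comp ((measurable_fst.comp measurable_fst).prodMk measurable_snd)).prodMk <|
    measurable_kacStep.comp ((measurable_snd.comp measurable_fst).prodMk measurable_alignUpdate)

lemma measurable_sqGap : Measurable (sqGap (d := d)) := by
  unfold sqGap sqDiff
  fun_prop

lemma measurePreserving_alignUpdate (z : StatePair d) :
    MeasurePreserving (alignUpdate z) (kacParam d) (kacParam d) :=
  (MeasurePreserving.id (pairUniform d)).skew_product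
    (g := fun p θ => toIocMod two_pi_pos 0 (θ + (planeAngle z.1 p - planeAngle z.2 p)))
    (measurable_snd.comp (measurable_alignUpdate.comp measurable_prodMk_left)) <|
    ae_of_all _ fun _ => (measurePreserving_toIocMod_angleUniform _).map_eq

lemma cos_alignUpdate_add_planeAngle (z : StatePair d) (q : KacUpdate d) :
    cos ((alignUpdate z q).2 + planeAngle z.2 q.1) = cos (q.2 + planeAngle z.1 q.1) := by
  rw [alignUpdate, toIocMod, zsmul_eq_mul, sub_add_eq_add_sub, cos_sub_int_mul_two_pi, add_assoc,
    sub_add_cancel]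

lemma sin_alignUpdate_add_planeAngle (z : StatePair d) (q : KacUpdate d) :
    sin ((alignUpdate z q).2 + planeAngle z.2 q.1) = sin (q.2 + planeAngle z.1 q.1) := by
  rw [alignUpdate, toIocMod, zsmul_eq_mul, sub_add_eq_add_sub, sin_sub_int_mul_two_pi, add_assoc,
    sub_add_cancel]

lemma OnSphere.coupledStep {r : ℝ} {z : StatePair d} (hz : OnSphere r z) {q : KacUpdate d}
    (hq : q.1.1 ≠ q.1.2) : OnSphere r (coupledStep z q) :=
  ⟨(sum_sq_kacStep hq).trans hz.1, (sum_sq_kacStep (q := alignUpdate z q) hq).trans hz.2⟩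

lemma OnSphere.sum_sqDiff {r : ℝ} {z : StatePair d} (hz : OnSphere r z) : ∑ k, sqDiff z k = 0 := by
  simp only [sqDiff, Finset.sum_sub_distrib, hz.1, hz.2, sub_self]

lemma sqGap_nonneg (z : StatePair d) : 0 ≤ sqGap z := Finset.sum_nonneg fun _ _ => sq_nonneg _

lemma OnSphere.sqGap_le {r : ℝ} {z : StatePair d} (hz : OnSphere r z) : sqGap z ≤ 2 * r ^ 2 := by
  have hfourth {x : Fin d → ℝ} (hx : ∑ k, x k ^ 2 = r) : ∑ k, (x k ^ 2) ^ 2 ≤ r ^ 2 :=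
    hx ▸ Finset.sum_sq_le_sq_sum_of_nonneg fun k _ => sq_nonneg (x k)
  calc sqGap z ≤ ∑ k, ((z.1 k ^ 2) ^ 2 + (z.2 k ^ 2) ^ 2) := Finset.sum_le_sum fun k _ => by
        rw [sqDiff]
        nlinarith [mul_nonneg (sq_nonneg (z.1 k)) (sq_nonneg (z.2 k))]
    _ ≤ 2 * r ^ 2 := by
        rw [Finset.sum_add_distrib]
        linarith [hfourth hz.1, hfourth hz.2]

lemma sqDiff_coupledStep_fst {q : KacUpdate d} (hq : q.1.1 ≠ q.1.2) (z : StatePair d) :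
    sqDiff (coupledStep z q) q.1.1 =
      (sqDiff z q.1.1 + sqDiff z q.1.2) * cos (q.2 + planeAngle z.1 q.1) ^ 2 := by
  have hsnd := kacStep_apply_fst_sq (x := z.2) (q := alignUpdate z q) hq
  rw [show (alignUpdate z q).1 = q.1 from rfl, cos_alignUpdate_add_planeAngle] at hsnd
  rw [sqDiff, coupledStep, kacStep_apply_fst_sq hq, hsnd, sqDiff, sqDiff]
  ring

lemma sqDiff_coupledStep_snd {q : KacUpdate d} (hq : q.1.1 ≠ q.1.2) (z : StatePair d) :
    sqDiff (coupledStep z q) q.1.2 =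
      (sqDiff z q.1.1 + sqDiff z q.1.2) * sin (q.2 + planeAngle z.1 q.1) ^ 2 := by
  have hsnd := kacStep_apply_snd_sq (x := z.2) (q := alignUpdate z q) hq
  rw [show (alignUpdate z q).1 = q.1 from rfl, sin_alignUpdate_add_planeAngle] at hsnd
  rw [sqDiff, coupledStep, kacStep_apply_snd_sq hq, hsnd, sqDiff, sqDiff]
  ring

lemma sqDiff_coupledStep_of_ne {q : KacUpdate d} {k : Fin d} (hk : k ≠ q.1.1 ∧ k ≠ q.1.2)
    (z : StatePair d) : sqDiff (coupledStep z q) k = sqDiff z k := by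
  simp only [sqDiff, coupledStep, kacStep_apply_of_ne hk,
    kacStep_apply_of_ne (q := alignUpdate z q) hk]

lemma sqGap_coupledStep {q : KacUpdate d} (hq : q.1.1 ≠ q.1.2) (z : StatePair d) :
    sqGap (coupledStep z q) =
      (sqGap z - sqDiff z q.1.1 ^ 2 - sqDiff z q.1.2 ^ 2) +
        (sqDiff z q.1.1 + sqDiff z q.1.2) ^ 2 *
          (cos (q.2 + planeAngle z.1 q.1) ^ 4 + sin (q.2 + planeAngle z.1 q.1) ^ 4) := by
  have hchange := sum_sub_sum_eq_of_eq_off_pair hq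
    fun k hk => congrArg (· ^ 2) (sqDiff_coupledStep_of_ne hk z)
  simp only [sqDiff_coupledStep_fst hq, sqDiff_coupledStep_snd hq] at hchange
  rw [sqGap, sqGap]
  linear_combination hchange

end CoupledStep

section Contraction

lemma integral_sqGap_coupledStep_angle {d : ℕ} {p : Fin d × Fin d} (hp : p.1 ≠ p.2)
    (z : StatePair d) :
    ∫ θ, sqGap (coupledStep z (p, θ)) ∂angleUniform =
      sqGap z - sqDiff z p.1 ^ 2 - sqDiff z p.2 ^ 2 +
        (sqDiff z p.1 + sqDiff z p.2) ^ 2 * (3 / 4) := by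
  have hmean := integral_cos_pow_four_add_sin_pow_four (planeAngle z.1 p)
  have hint : Integrable
      (fun θ => cos (θ + planeAngle z.1 p) ^ 4 + sin (θ + planeAngle z.1 p) ^ 4) angleUniform :=
    .of_integral_ne_zero (by rw [hmean]; norm_num)
  simp only [sqGap_coupledStep (q := (p, _)) hp]
  rw [integral_add (integrable_const _) (hint.const_mul _), integral_const_mul, hmean,
    integral_const, probReal_univ, one_smul]

/-- The factor by which one step of the coupling contracts the expected `sqGap`. -/
def contractionRate (d : ℕ) : ℝ := 1 - (d + 2) / (2 * d * (d - 1))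

variable {d : ℕ} [d.AtLeastTwo]

lemma contractionRate_nonneg : 0 ≤ contractionRate d := by
  have hd : (2 : ℝ) ≤ d := mod_cast Nat.AtLeastTwo.prop
  rw [contractionRate, sub_nonneg, div_le_one (by nlinarith)]
  nlinarith

lemma contractionRate_le : contractionRate d ≤ 1 - 1 / (2 * d) := by
  have hd : (2 : ℝ) ≤ d := mod_cast Nat.AtLeastTwo.prop
  rw [contractionRate, sub_le_sub_iff_left, div_le_div_iff₀ (by linarith) (by nlinarith)]
  nlinarith

lemma contractionRate_pow_le (t : ℕ) : contractionRate d ^ t ≤ (1 - 1 / (2 * d)) ^ t :=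
  pow_le_pow_left₀ contractionRate_nonneg contractionRate_le t

lemma integral_sqGap_coupledStep {r : ℝ} {z : StatePair d} (hz : OnSphere r z) :
    ∫ q, sqGap (coupledStep z q) ∂(kacParam d) = contractionRate d * sqGap z := by
  have hint : Integrable (fun q => sqGap (coupledStep z q)) (kacParam d) := by
    refine .of_bound (measurable_sqGap.comp (measurable_coupledStep.comp
      measurable_prodMk_left)).aestronglyMeasurable (2 * r ^ 2) ?_
    filter_upwards [ae_kacParam_ne d] with q hq
    rw [norm_of_nonneg (sqGap_nonneg _)]
    exact (hz.coupledStep hq).sqGap_le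
  have hd : (2 : ℝ) ≤ d := mod_cast Nat.AtLeastTwo.prop
  calc ∫ q, sqGap (coupledStep z q) ∂(kacParam d)
      = (d * (d - 1) : ℝ)⁻¹ * ∑ p ∈ (Finset.univ : Finset (Fin d)).offDiag,
          ∫ θ, sqGap (coupledStep z (p, θ)) ∂angleUniform := by
        rw [kacParam, integral_prod _ hint, integral_pairUniform]
    _ = (d * (d - 1) : ℝ)⁻¹ * ∑ p ∈ (Finset.univ : Finset (Fin d)).offDiag,
          (∑ k, sqDiff z k ^ 2 - sqDiff z p.1 ^ 2 - sqDiff z p.2 ^ 2 +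
            (sqDiff z p.1 + sqDiff z p.2) ^ 2 * (3 / 4)) := by
        congr 1
        exact Finset.sum_congr rfl fun p hp =>
          integral_sqGap_coupledStep_angle (Finset.mem_offDiag.1 hp).2.2 z
    _ = contractionRate d * sqGap z := by
        rw [sum_offDiag_sq_update_of_sum_eq_zero _ hz.sum_sqDiff, Fintype.card_fin,
          contractionRate, sqGap]
        have hd₁ : (d : ℝ) - 1 ≠ 0 := by linarith
        field_simp
        ring

lemma integral_sqGap_drivenState {r : ℝ} {z : StatePair d} (hz : OnSphere r z) (t : ℕ) :
    ∫ ω : ℕ → KacUpdate d, sqGap (drivenState coupledStep z t fun u => ω u)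
        ∂(Measure.infinitePi fun _ => kacParam d) =
      contractionRate d ^ t * sqGap z := by
  have hnoise := measurePreserving_restrict_fin (kacParam d) t
  have hmeas : Measurable fun past => sqGap (drivenState coupledStep z t past) :=
    measurable_sqGap.comp (measurable_drivenState measurable_coupledStep z t)
  rw [← integral_drivenState measurable_coupledStep (ae_kacParam_ne d)
    (fun z _ hq hz => hz.coupledStep hq) measurable_sqGap
    (fun z hz => (norm_of_nonneg (sqGap_nonneg z)).trans_le hz.sqGap_le)
    (fun z hz => integral_sqGap_coupledStep hz) hz t,
    ← hnoise.map_eq, integral_map hnoise.aemeasurable hmeas.aestronglyMeasurable]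

lemma measurePreserving_alignUpdate_drivenState (z : StatePair d) (T : ℕ) :
    MeasurePreserving
      (fun (ω : ℕ → KacUpdate d) (u : Fin T) =>
        alignUpdate (drivenState coupledStep z u fun v => ω v) (ω u))
      (Measure.infinitePi fun _ => kacParam d) (Measure.pi fun _ => kacParam d) := by
  have halign (n : ℕ) : Measurable (Function.uncurry fun past : Fin n → KacUpdate d =>
      alignUpdate (drivenState coupledStep z n past)) :=
    measurable_alignUpdate.comp (((measurable_drivenState measurable_coupledStep z n).comp
      measurable_fst).prodMk measurable_snd)
  exact (measurePreserving_predictable halign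
    (fun _ _ => measurePreserving_alignUpdate _) T).comp
      (measurePreserving_restrict_fin (kacParam d) T)

end Contraction

theorem kac_contractive_coupling_general
    {d : ℕ} (hd : 2 ≤ d) (X₀ Y₀ : Fin d → ℝ) (hXY : ∑ i, X₀ i ^ 2 = ∑ i, Y₀ i ^ 2) :
    ∃ (Ω : Type) (_ : MeasurableSpace Ω) (μ : Measure Ω)
      (X Y : ℕ → Ω → Fin d → ℝ),
      IsProbabilityMeasure μ ∧
      (∀ ω, X 0 ω = X₀) ∧ (∀ ω, Y 0 ω = Y₀) ∧
      (∀ T : ℕ, Measure.map (fun ω => fun s : Fin (T + 1) => X (s : ℕ) ω) μ =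
        kacPathLaw d T X₀) ∧
      (∀ T : ℕ, Measure.map (fun ω => fun s : Fin (T + 1) => Y (s : ℕ) ω) μ =
        kacPathLaw d T Y₀) ∧
      ∀ t : ℕ, ∫ ω, ∑ i, (X t ω i ^ 2 - Y t ω i ^ 2) ^ 2 ∂μ =
        contractionRate d ^ t * ∑ i, (X₀ i ^ 2 - Y₀ i ^ 2) ^ 2 := by
  have : d.AtLeastTwo := ⟨hd⟩
  let Z (t : ℕ) (ω : ℕ → KacUpdate d) : StatePair d :=
    drivenState coupledStep (X₀, Y₀) t fun u => ω u
  refine ⟨ℕ → KacUpdate d, inferInstance, Measure.infinitePi fun _ => kacParam d,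
    fun t ω => (Z t ω).1, fun t ω => (Z t ω).2, inferInstance, fun _ => rfl, fun _ => rfl,
    fun T => ?_, fun T => ?_, integral_sqGap_drivenState ⟨hXY, rfl⟩⟩
  · exact map_path_eq_kacPathLaw (X := fun t ω => (Z t ω).1) (U := fun n ω => ω n)
      (fun _ => rfl) (fun _ _ => rfl) (measurePreserving_restrict_fin _ T)
  · exact map_path_eq_kacPathLaw (X := fun t ω => (Z t ω).2)
      (U := fun n ω => alignUpdate (Z n ω) (ω n)) (fun _ => rfl) (fun _ _ => rfl)
      (measurePreserving_alignUpdate_drivenState (X₀, Y₀) T)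

/-- **Lemma 3.3 (contractive coupling)**: two Kac walks on the sphere started at arbitrary
points can be coupled so that the expected squared difference of the coordinate squares
decays exponentially. -/
theorem kac_contractive_coupling
    {d : ℕ} (hd : 2 ≤ d) (X₀ Y₀ : Fin d → ℝ)
    (hX₀ : ∑ i, X₀ i ^ 2 = 1) (hY₀ : ∑ i, Y₀ i ^ 2 = 1) :
    ∃ (Ω : Type) (_ : MeasurableSpace Ω) (μ : Measure Ω)
      (X Y : ℕ → Ω → Fin d → ℝ),
      IsProbabilityMeasure μ ∧
      (∀ ω, X 0 ω = X₀) ∧ (∀ ω, Y 0 ω = Y₀) ∧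
      (∀ T : ℕ, Measure.map (fun ω => fun s : Fin (T + 1) => X (s : ℕ) ω) μ =
        kacPathLaw d T X₀) ∧
      (∀ T : ℕ, Measure.map (fun ω => fun s : Fin (T + 1) => Y (s : ℕ) ω) μ =
        kacPathLaw d T Y₀) ∧
      ∀ t : ℕ,
        (∫ ω, ∑ i, (X t ω i ^ 2 - Y t ω i ^ 2) ^ 2 ∂μ) ≤ 2 * (1 - 1 / (2 * d)) ^ t ∧
        2 * (1 - 1 / (2 * d)) ^ t ≤ 2 * Real.exp (-(t : ℝ) / (2 * d)) := by
  have : d.AtLeastTwo := ⟨hd⟩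
  have hd₁ : (1 : ℝ) ≤ 2 * d := mod_cast (by lia : 1 ≤ 2 * d)
  obtain ⟨Ω, mΩ, μ, X, Y, hμ, hX, hY, hXlaw, hYlaw, hgap⟩ :=
    kac_contractive_coupling_general hd X₀ Y₀ (hX₀.trans hY₀.symm)
  refine ⟨Ω, mΩ, μ, X, Y, hμ, hX, hY, hXlaw, hYlaw, fun t => ⟨?_, ?_⟩⟩
  · calc ∫ ω, ∑ i, (X t ω i ^ 2 - Y t ω i ^ 2) ^ 2 ∂μ
        = contractionRate d ^ t * sqGap (X₀, Y₀) := hgap t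
      _ ≤ contractionRate d ^ t * (2 * 1 ^ 2) :=
          mul_le_mul_of_nonneg_left (OnSphere.sqGap_le ⟨hX₀, hY₀⟩)
            (pow_nonneg contractionRate_nonneg t)
      _ = 2 * contractionRate d ^ t := by ring
      _ ≤ 2 * (1 - 1 / (2 * d)) ^ t :=
          mul_le_mul_of_nonneg_left (contractionRate_pow_le t) zero_le_two
  · gcongr
    exact one_sub_one_div_pow_le_exp hd₁ t

end KacJL
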